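/- Maximal stable color lemma: let m ≥ 1, let T be a subtree of 2^{<ℕ} isomorphic to 2^{<ℕ} with root ρ₀ (the ⊆-least element of T), and let h : List Bool → Fin m be a coloring of nodes. Then there exist a color c ∈ Fin m and a node ρ ∈ T with ρ₀ ⊊ ρ such that (i) every τ ∈ T with ρ ⊊ τ satisfies c ≤ h(τ), and (ii) there is a subtree S ⊆ {τ ∈ T : ρ ⊊ τ} isomorphic to 2^{<ℕ} with h(τ) = c for all τ ∈ S. -/

import Mathlib

/-- Strict prefix relation on `List Bool` (σ is a proper initial segment of τ). -/
def SPrefix (σ τ : List Bool) : Prop := σ <+: τ ∧ σ ≠ τ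

/-- `S` is a subtree of `2^{<ℕ}` isomorphic to `2^{<ℕ}`: there is a bijection
`b` from `List Bool` onto `S` such that σ ⊆ τ ↔ b σ ⊆ b τ. -/
def IsoSubtree (S : Set (List Bool)) : Prop :=
  ∃ b : List Bool → List Bool,
    (∀ σ, b σ ∈ S) ∧ (∀ t ∈ S, ∃ σ, b σ = t) ∧
    Function.Injective b ∧
    ∀ σ τ : List Bool, σ <+: τ ↔ b σ <+: b τ

/-- `c` is a strictly increasing `n`-chain of elements of `S`. -/
def ChainIn (n : ℕ) (S : Set (List Bool)) (c : Fin n → List Bool) : Prop :=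
  (∀ i, c i ∈ S) ∧ ∀ i j : Fin n, i < j → SPrefix (c i) (c j)

/-!
The least color occurring above a node can only increase when one passes to an extension, and it
takes finitely many values. At a node where it is as large as possible it has the same value `c` on
all extensions, so no smaller color occurs above and nodes of color `c` are dense above. Inside a
dense set of nodes one builds a copy of the full tree from the root upwards, extending each of the
immediate successors of a node already chosen to a node of the dense set.
-/

theorem exists_stable_value {α β : Type*} [LinearOrder β] (r : α → α → Prop) [IsPreorder α r]
    (f : α → β) (hf : (Set.range f).Finite) (x : α) :
    ∃ y, r x y ∧ ∃ c, (∀ z, r y z → c ≤ f z) ∧ ∀ z, r y z → ∃ w, r z w ∧ f w = c := by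
  have exists_least (z : α) : ∃ w, r z w ∧ ∀ v, r z v → f w ≤ f v := by
    obtain ⟨w, hzw, hw⟩ := Set.Finite.exists_minimalFor' f {w | r z w}
      (hf.subset (Set.image_subset_range f _)) ⟨z, refl z⟩
    exact ⟨w, hzw, fun v hzv => (le_total _ _).elim id (hw hzv)⟩
  choose μ r_μ μ_le using exists_least
  obtain ⟨y, hxy, hy⟩ := Set.Finite.exists_maximalFor' (f ∘ μ) {y | r x y}
    (hf.subset ((Set.image_subset_range _ _).trans (Set.range_comp_subset_range μ f)))
    ⟨x, refl x⟩
  refine ⟨y, hxy, f (μ y), μ_le y, fun z hyz => ⟨μ z, r_μ z, ?_⟩⟩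
  have μ_mono : f (μ y) ≤ f (μ z) := μ_le y _ (_root_.trans hyz (r_μ z))
  exact le_antisymm (hy (_root_.trans hxy hyz) μ_mono) μ_mono

theorem eq_of_append_singleton_prefix {α : Type*} {s t : List α} {x y : α}
    (hx : s ++ [x] <+: t) (hy : s ++ [y] <+: t) : x = y := by
  have hxy : s ++ [x] <+: s ++ [y] := List.prefix_of_prefix_length_le hx hy (by simp)
  simpa using hxy.eq_of_length (by simp)

section iterExtend

variable {α : Type*}

/-- The tree map sending `[]` to `s` and each child `l ++ [x]` of `l` to the extension under `e` of
the corresponding child of the image of `l`. -/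
def iterExtend (e : List α → List α) (s l : List α) : List α :=
  l.foldl (fun t x => e (t ++ [x])) s

variable {e : List α → List α}

theorem iterExtend_mem {D : Set (List α)} (he : ∀ t, e t ∈ D) {s : List α} (hs : s ∈ D)
    (l : List α) : iterExtend e s l ∈ D := by
  induction l generalizing s with
  | nil => exact hs
  | cons x _ ih => exact ih (he (s ++ [x]))

theorem prefix_iterExtend (he : ∀ t, t <+: e t) (s l : List α) : s <+: iterExtend e s l := by
  induction l generalizing s with
  | nil => exact List.prefix_rfl
  | cons x l ih => exact (List.prefix_append s [x]).trans ((he _).trans (ih _))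

theorem append_singleton_prefix_iterExtend_cons (he : ∀ t, t <+: e t) (s : List α) (x : α)
    (l : List α) : s ++ [x] <+: iterExtend e s (x :: l) :=
  (he _).trans (prefix_iterExtend he _ l)

theorem iterExtend_prefix_iterExtend_iff (he : ∀ t, t <+: e t) (s σ τ : List α) :
    iterExtend e s σ <+: iterExtend e s τ ↔ σ <+: τ := by
  induction σ generalizing s τ with
  | nil => exact iff_of_true (prefix_iterExtend he s τ) List.nil_prefix
  | cons x σ ih =>
    have hx := append_singleton_prefix_iterExtend_cons he s x σ
    cases τ with
    | nil =>
      refine iff_of_false (fun h => ?_) (by simp)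
      simpa [iterExtend] using (hx.trans h).length_le
    | cons y τ =>
      rw [List.cons_prefix_cons]
      have hy := append_singleton_prefix_iterExtend_cons he s y τ
      constructor
      · intro h
        obtain rfl : x = y := eq_of_append_singleton_prefix (hx.trans h) hy
        exact ⟨rfl, (ih _ τ).1 h⟩
      · rintro ⟨rfl, h⟩
        exact (ih _ τ).2 h

end iterExtend

section PrefixEmbedding

/-- Self-embeddings of the tree `List α` ordered by the prefix relation; for `α = Bool` their ranges
are the subtrees isomorphic to `2^{<ℕ}`. -/
abbrev PrefixEmbedding (α : Type*) : Type _ :=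
  List.IsPrefix (α := α) ↪r List.IsPrefix (α := α)

variable {α : Type*}

theorem exists_prefixEmbedding_of_dense {D : Set (List α)} (hD : ∀ s, ∃ t ∈ D, s <+: t) :
    ∃ b : PrefixEmbedding α, ∀ σ, b σ ∈ D := by
  choose e e_mem prefix_e using hD
  exact ⟨RelEmbedding.ofMapRelIff (iterExtend e (e []))
    (iterExtend_prefix_iterExtend_iff prefix_e (e [])), iterExtend_mem e_mem (e_mem [])⟩

theorem exists_prefixEmbedding_of_dense_above {D : Set (List α)} (ρ : List α)
    (hD : ∀ s, ρ <+: s → ∃ t ∈ D, s <+: t) :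
    ∃ b : PrefixEmbedding α, ∀ σ, b σ ∈ D ∧ ρ <+: b σ := by
  have dense_shift (s : List α) : ∃ t ∈ {t | ρ ++ t ∈ D}, s <+: t := by
    obtain ⟨_, ht, u, rfl⟩ := hD (ρ ++ s) (List.prefix_append ρ s)
    exact ⟨s ++ u, by simpa using ht, List.prefix_append s u⟩
  obtain ⟨b, hb⟩ := exists_prefixEmbedding_of_dense dense_shift
  exact ⟨b.trans (RelEmbedding.ofMapRelIff (ρ ++ ·) fun _ _ => List.prefix_append_right_inj ρ),
    fun σ => ⟨hb σ, List.prefix_append ρ (b σ)⟩⟩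

end PrefixEmbedding

theorem isoSubtree_iff_exists_range_eq {S : Set (List Bool)} :
    IsoSubtree S ↔ ∃ b : PrefixEmbedding Bool, Set.range b = S := by
  constructor
  · rintro ⟨b, b_mem, b_surj, b_inj, b_prefix⟩
    exact ⟨⟨⟨b, b_inj⟩, (b_prefix _ _).symm⟩,
      Set.Subset.antisymm (Set.range_subset_iff.2 b_mem) b_surj⟩
  · rintro ⟨b, rfl⟩
    exact ⟨b, Set.mem_range_self, fun _ ht => ht, b.injective, fun _ _ => b.map_rel_iff.symm⟩

theorem sPrefix_of_append_singleton_prefix {σ τ : List Bool} {x : Bool} (h : σ ++ [x] <+: τ) :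
    SPrefix σ τ := by
  refine ⟨(List.prefix_append σ [x]).trans h, ?_⟩
  rintro rfl
  simpa using h.length_le

theorem SPrefix.map {σ τ : List Bool} (h : SPrefix σ τ) (b : PrefixEmbedding Bool) :
    SPrefix (b σ) (b τ) :=
  ⟨b.map_rel_iff.2 h.1, b.injective.ne h.2⟩

theorem maximal_stable_color_general {β : Type*} [LinearOrder β] {T : Set (List Bool)}
    (hT : IsoSubtree T) {ρ₀ : List Bool} (hρ₀ : ρ₀ ∈ T) (h : List Bool → β)
    (hfin : (h '' T).Finite) :
    ∃ c : β, ∃ ρ ∈ T, SPrefix ρ₀ ρ ∧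
      (∀ τ ∈ T, SPrefix ρ τ → c ≤ h τ) ∧
      ∃ S : Set (List Bool), S ⊆ {τ ∈ T | SPrefix ρ τ} ∧ IsoSubtree S ∧
        ∀ τ ∈ S, h τ = c := by
  obtain ⟨b, rfl⟩ := isoSubtree_iff_exists_range_eq.1 hT
  obtain ⟨σ₀, rfl⟩ := hρ₀
  rw [← Set.range_comp] at hfin
  obtain ⟨σ, hσ, c, c_le, c_dense⟩ :=
    exists_stable_value (· <+: ·) (h ∘ b) hfin (σ₀ ++ [true])
  have c_dense_above (s : List Bool) (hs : σ ++ [true] <+: s) :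
      ∃ t ∈ {t | h (b t) = c}, s <+: t := by
    obtain ⟨t, hst, ht⟩ := c_dense s ((List.prefix_append σ [true]).trans hs)
    exact ⟨t, ht, hst⟩
  obtain ⟨g, hg⟩ := exists_prefixEmbedding_of_dense_above _ c_dense_above
  refine ⟨c, b σ, ⟨σ, rfl⟩, (sPrefix_of_append_singleton_prefix hσ).map b, ?_,
    Set.range (g.trans b), ?_, isoSubtree_iff_exists_range_eq.2 ⟨_, rfl⟩, ?_⟩
  · rintro _ ⟨τ, rfl⟩ hτ
    exact c_le τ (b.map_rel_iff.1 hτ.1)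
  · rintro _ ⟨l, rfl⟩
    exact ⟨⟨g l, rfl⟩, (sPrefix_of_append_singleton_prefix (hg l).2).map b⟩
  · rintro _ ⟨l, rfl⟩
    exact (hg l).1

/-- Maximal stable color lemma. -/
theorem maximal_stable_color (m : ℕ) (hm : 1 ≤ m)
    (T : Set (List Bool)) (hT : IsoSubtree T)
    (ρ₀ : List Bool) (hρ₀ : ρ₀ ∈ T) (hroot : ∀ τ ∈ T, ρ₀ <+: τ)
    (h : List Bool → Fin m) :
    ∃ c : Fin m, ∃ ρ ∈ T, SPrefix ρ₀ ρ ∧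
      (∀ τ ∈ T, SPrefix ρ τ → c ≤ h τ) ∧
      ∃ S : Set (List Bool), S ⊆ {τ ∈ T | SPrefix ρ τ} ∧ IsoSubtree S ∧
        ∀ τ ∈ S, h τ = c :=
  maximal_stable_color_general hT hρ₀ h (Set.toFinite _)
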